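/- arXiv:2010.02420 — 2 statements merged into one kernel-verified Lean document; each statement's English description precedes it below -/
import Mathlib

section
/- Let M be a definably complete locally o-minimal densely linearly ordered structure. Then every definable function f defined on an open interval I ⊆ M that is locally strictly increasing (i.e., every point of I has a neighborhood in I on which f is strictly increasing) is strictly increasing on I; similarly, every locally strictly decreasing definable function on an open interval is strictly decreasing. -/
open FirstOrder Set

/-- A subset of `M^α` definable with parameters from all of `M`. -/
def DefSet (L : FirstOrder.Language) {M : Type*} [L.Structure M] {α : Type*}
    (s : Set (α → M)) : Prop :=
  Set.Definable (Set.univ : Set M) L s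

/-- A subset of `M` definable with parameters from all of `M`. -/
def DefSet1 (L : FirstOrder.Language) {M : Type*} [L.Structure M] (s : Set M) : Prop :=
  DefSet L {x : Fin 1 → M | x 0 ∈ s}

/-- The language contains the order and the group operation:
the order relation and the graph of addition are definable without parameters
(here: with parameters, which is what is used). -/
def OrdAddDef (L : FirstOrder.Language) (M : Type*) [L.Structure M] [Preorder M] [Add M] : Prop :=
  DefSet L {x : Fin 2 → M | x 0 < x 1} ∧ DefSet L {x : Fin 3 → M | x 0 + x 1 = x 2}

/-- An open interval, with endpoints allowed to be `±∞`. -/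
def IsOpenItvl {M : Type*} [Preorder M] (s : Set M) : Prop :=
  (∃ a b : M, s = Set.Ioo a b) ∨ (∃ a : M, s = Set.Ioi a) ∨ (∃ b : M, s = Set.Iio b) ∨
    s = Set.univ

/-- A finite union of points and open intervals. -/
def FinUnionPtsItvls {M : Type*} [Preorder M] (s : Set M) : Prop :=
  ∃ (k : ℕ) (f : Fin k → Set M),
    (∀ i, (∃ x, f i = {x}) ∨ IsOpenItvl (f i)) ∧ s = ⋃ i, f i

/-- Definably complete. -/
def DefComplete (L : FirstOrder.Language) (M : Type*) [L.Structure M] [Preorder M] : Prop :=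
  ∀ s : Set M, DefSet1 L s → s.Nonempty → BddAbove s → ∃ a : M, IsLUB s a

/-- Locally o-minimal. -/
def LocOMin (L : FirstOrder.Language) (M : Type*) [L.Structure M] [Preorder M] : Prop :=
  ∀ s : Set M, DefSet1 L s → ∀ a : M,
    ∃ c d : M, c < a ∧ a < d ∧ FinUnionPtsItvls (s ∩ Set.Ioo c d)

/-- Uniformly locally o-minimal of the second kind. -/
def ULOmin2 (L : FirstOrder.Language) (M : Type*) [L.Structure M] [Preorder M] : Prop :=
  ∀ n : ℕ, 0 < n → ∀ X : Set (Fin n ⊕ Unit → M), DefSet L X →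
    ∀ (a : M) (b : Fin n → M),
      ∃ (lo hi : Fin n → M) (c d : M),
        (∀ i, lo i < b i ∧ b i < hi i) ∧ c < a ∧ a < d ∧
        ∀ y : Fin n → M, (∀ i, lo i < y i ∧ y i < hi i) →
          FinUnionPtsItvls {t : M | t ∈ Set.Ioo c d ∧ Sum.elim y (fun _ => t) ∈ X}

/-- The function `f`, restricted to `C ⊆ M`, is definable (its graph over `C` is definable). -/
def DefFunOn1 (L : FirstOrder.Language) {M : Type*} [L.Structure M]
    (C : Set M) (f : M → M) : Prop :=
  DefSet L {x : Fin 2 → M | x 0 ∈ C ∧ f (x 0) = x 1}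

/-- The function `f : M^m → M`, restricted to `C`, is definable. -/
def DefFunOn (L : FirstOrder.Language) {M : Type*} [L.Structure M] {m : ℕ}
    (C : Set (Fin m → M)) (f : (Fin m → M) → M) : Prop :=
  DefSet L {x : Fin m ⊕ Unit → M | (x ∘ Sum.inl) ∈ C ∧ f (x ∘ Sum.inl) = x (Sum.inr ())}

/-!
If `f` is locally strictly increasing but `f u ≤ f x` for some `x < u`, the set of such `u` is
definable and bounded below by `x`, so it has an infimum `s`. Every point strictly between `x` and
`s` has a value above `f x`, while points to the right of and arbitrarily close to `s`, or `s`
itself, do not. Strict monotonicity of `f` near `s` rules this out. The decreasing case is the same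
argument with the order on the values reversed.
-/

open Topology OrderDual

section OrderTopology

variable {α β : Type*} [TopologicalSpace α]

/-- `f` is locally strictly increasing on `s`: each point of `s` has a neighborhood relative to `s`
on which `f` is strictly increasing. -/
def LocallyStrictMonoOn [Preorder α] [Preorder β] (f : α → β) (s : Set α) : Prop :=
  ∀ x ∈ s, ∃ U ∈ 𝓝[s] x, StrictMonoOn f U

/-- `f` is locally strictly decreasing on `s`: each point of `s` has a neighborhood relative to `s`
on which `f` is strictly decreasing. -/
def LocallyStrictAntiOn [Preorder α] [Preorder β] (f : α → β) (s : Set α) : Prop :=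
  ∀ x ∈ s, ∃ U ∈ 𝓝[s] x, StrictAntiOn f U

theorem LocallyStrictAntiOn.dual_right [Preorder α] [Preorder β] {f : α → β} {s : Set α}
    (hf : LocallyStrictAntiOn f s) : LocallyStrictMonoOn (toDual ∘ f) s := fun x hx =>
  let ⟨U, hU, hfU⟩ := hf x hx
  ⟨U, hU, hfU.dual_right⟩

variable [LinearOrder α] [OrderTopology α] [DenselyOrdered α] [LinearOrder β]
  {f : α → β} {I : Set α}

theorem LocallyStrictMonoOn.exists_mem_nhdsWithin_lt (hf : LocallyStrictMonoOn f I)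
    (hI : I.OrdConnected) {x s : α} (hx : x ∈ I) (hs : s ∈ I) (hxs : x ≤ s)
    (hlt : ∀ t ∈ Ioo x s, f x < f t) : ∃ U ∈ 𝓝[I] s, ∀ z ∈ U, s ≤ z → x < z → f x < f z := by
  obtain ⟨U, hU, hfU⟩ := hf s hs
  refine ⟨U, hU, fun z hzU hsz hxz => ?_⟩
  obtain rfl | hxs := hxs.eq_or_lt
  · exact hfU (mem_of_mem_nhdsWithin hx hU) hzU hxz
  · have hsub : Ioo x s ⊆ I := Ioo_subset_Icc_self.trans (hI.out hx hs)
    have : (𝓝[Ioo x s] s).NeBot := right_nhdsWithin_Ioo_neBot hxs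
    obtain ⟨t, htU, ht⟩ : (U ∩ Ioo x s).Nonempty :=
      Filter.nonempty_of_mem
        (Filter.inter_mem (nhdsWithin_mono s hsub hU) self_mem_nhdsWithin)
    exact (hlt t ht).trans (hfU htU hzU (ht.2.trans_le hsz))

theorem LocallyStrictMonoOn.strictMonoOn (hf : LocallyStrictMonoOn f I) (hI : I.OrdConnected)
    (hglb : ∀ x ∈ I, (I ∩ f ⁻¹' Iic (f x) ∩ Ioi x).Nonempty →
      ∃ s, IsGLB (I ∩ f ⁻¹' Iic (f x) ∩ Ioi x) s) :
    StrictMonoOn f I := by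
  intro x hx u hu hxu
  by_contra! hux
  have huE : u ∈ I ∩ f ⁻¹' Iic (f x) ∩ Ioi x := ⟨⟨hu, hux⟩, hxu⟩
  obtain ⟨s, hs⟩ := hglb x hx ⟨u, huE⟩
  have hxs : x ≤ s := hs.2 fun z hz => le_of_lt hz.2
  have hsI : s ∈ I := hI.out hx hu ⟨hxs, hs.1 huE⟩
  have hlt : ∀ t ∈ Ioo x s, f x < f t := fun t ht => by
    have htI : t ∈ I := hI.out hx hsI ⟨ht.1.le, ht.2.le⟩
    by_contra! htx
    exact (hs.1 ⟨⟨htI, htx⟩, ht.1⟩).not_gt ht.2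
  obtain ⟨U, hU, hlt'⟩ := hf.exists_mem_nhdsWithin_lt hI hx hsI hxs hlt
  obtain ⟨z, hzE, hzU⟩ := ((hs.frequently_nhds_mem ⟨u, huE⟩).and_eventually
    (mem_nhdsWithin_iff_eventually.1 hU)).exists
  exact (hlt' z (hzU hzE.1.1) (hs.1 hzE) hzE.2).not_ge hzE.1.2

theorem LocallyStrictAntiOn.strictAntiOn (hf : LocallyStrictAntiOn f I) (hI : I.OrdConnected)
    (hglb : ∀ x ∈ I, (I ∩ f ⁻¹' Ici (f x) ∩ Ioi x).Nonempty →
      ∃ s, IsGLB (I ∩ f ⁻¹' Ici (f x) ∩ Ioi x) s) :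
    StrictAntiOn f I :=
  strictMonoOn_toDual_comp_iff.1 (hf.dual_right.strictMonoOn hI hglb)

end OrderTopology

section Definability

variable {L : FirstOrder.Language} {M : Type*} [L.Structure M]

theorem DefSet.defSet1_exists {s : Set (Fin 2 → M)} (hs : DefSet L s) :
    DefSet1 L {y | ∃ z, ![y, z] ∈ s} := by
  have hproj : DefSet L ((fun v : Fin 2 → M => v ∘ (![0] : Fin 1 → Fin 2)) '' s) :=
    Set.Definable.image_comp hs _
  unfold DefSet1
  convert hproj using 1
  ext y
  constructor
  · rintro ⟨z, hz⟩
    exact ⟨_, hz, funext fun i => by fin_cases i; rfl⟩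
  · rintro ⟨v, hv, rfl⟩
    refine ⟨v 1, ?_⟩
    convert hv
    ext i
    fin_cases i <;> rfl

theorem DefSet1.inter {s t : Set M} (hs : DefSet1 L s) (ht : DefSet1 L t) : DefSet1 L (s ∩ t) :=
  Set.Definable.inter hs ht

theorem DefFunOn1.inter_preimage {C E : Set M} {f : M → M} (hf : DefFunOn1 L C f)
    (hE : DefSet1 L E) : DefSet1 L (C ∩ f ⁻¹' E) := by
  have hE' : DefSet L {v : Fin 2 → M | v 1 ∈ E} := Set.Definable.preimage_comp ![1] hE
  convert DefSet.defSet1_exists (Set.Definable.inter hf hE') using 1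
  ext y
  simp

variable [LinearOrder M]

theorem defSet1_lowerBounds (hlt : DefSet L {x : Fin 2 → M | x 0 < x 1}) {s : Set M}
    (hs : DefSet1 L s) : DefSet1 L (lowerBounds s) := by
  have hs' : DefSet L {v : Fin 2 → M | v 1 ∈ s} := Set.Definable.preimage_comp ![1] hs
  have hgt : DefSet L {v : Fin 2 → M | v 1 < v 0} := Set.Definable.preimage_comp ![1, 0] hlt
  have hcompl : lowerBounds s =
      {y | ∃ z, ![y, z] ∈ {v : Fin 2 → M | v 1 ∈ s} ∩ {v | v 1 < v 0}}ᶜ := by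
    ext y
    simp [lowerBounds]
  rw [hcompl]
  exact Set.Definable.compl (DefSet.defSet1_exists (Set.Definable.inter hs' hgt))

theorem defSet1_Iic (hlt : DefSet L {x : Fin 2 → M | x 0 < x 1}) (a : M) :
    DefSet1 L (Iic a) := by
  rw [← lowerBounds_singleton]
  exact defSet1_lowerBounds hlt (Set.Definable.singleton_of_mem L (mem_univ a))

theorem defSet1_Ioi (hlt : DefSet L {x : Fin 2 → M | x 0 < x 1}) (a : M) :
    DefSet1 L (Ioi a) := by
  rw [← compl_Iic]
  exact Set.Definable.compl (defSet1_Iic hlt a)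

theorem defSet1_Ici (hlt : DefSet L {x : Fin 2 → M | x 0 < x 1}) (a : M) :
    DefSet1 L (Ici a) := by
  rw [← Ioi_union_left]
  exact Set.Definable.union (defSet1_Ioi hlt a)
    (Set.Definable.singleton_of_mem L (mem_univ a))

theorem DefComplete.exists_isGLB (hdc : DefComplete L M)
    (hlt : DefSet L {x : Fin 2 → M | x 0 < x 1}) {s : Set M} (hs : DefSet1 L s)
    (hne : s.Nonempty) (hbdd : BddBelow s) : ∃ a, IsGLB s a := by
  obtain ⟨a, ha⟩ := hdc _ (defSet1_lowerBounds hlt hs) hbdd hne.bddAbove_lowerBounds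
  exact ⟨a, isLUB_lowerBounds.1 ha⟩

theorem DefFunOn1.exists_isGLB_inter_preimage_inter_Ioi (hdc : DefComplete L M)
    (hlt : DefSet L {x : Fin 2 → M | x 0 < x 1}) {C E : Set M} {f : M → M}
    (hf : DefFunOn1 L C f) (hE : DefSet1 L E) (x : M) (hne : (C ∩ f ⁻¹' E ∩ Ioi x).Nonempty) :
    ∃ s, IsGLB (C ∩ f ⁻¹' E ∩ Ioi x) s :=
  hdc.exists_isGLB hlt ((hf.inter_preimage hE).inter (defSet1_Ioi hlt x)) hne
    (bddBelow_Ioi.mono inter_subset_right)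

end Definability

theorem stmt_2_general {L : FirstOrder.Language} {M : Type*} [L.Structure M]
    [LinearOrder M] [DenselyOrdered M] [TopologicalSpace M] [OrderTopology M]
    (hlt : DefSet L {x : Fin 2 → M | x 0 < x 1}) (hdc : DefComplete L M)
    {I : Set M} (hI : I.OrdConnected) {f : M → M} (hf : DefFunOn1 L I f) :
    (LocallyStrictMonoOn f I → StrictMonoOn f I) ∧
      (LocallyStrictAntiOn f I → StrictAntiOn f I) :=
  ⟨fun hloc => hloc.strictMonoOn hI fun x _ =>
      hf.exists_isGLB_inter_preimage_inter_Ioi hdc hlt (defSet1_Iic hlt (f x)) x,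
    fun hloc => hloc.strictAntiOn hI fun x _ =>
      hf.exists_isGLB_inter_preimage_inter_Ioi hdc hlt (defSet1_Ici hlt (f x)) x⟩

/-- Locally strictly monotone definable functions on an open interval
are strictly monotone, in a definably complete locally o-minimal structure. -/
theorem stmt_2 (L : FirstOrder.Language) (M : Type*) [L.Structure M]
    [LinearOrder M] [DenselyOrdered M] [NoMinOrder M] [NoMaxOrder M] [Nonempty M]
    (hlt : DefSet L {x : Fin 2 → M | x 0 < x 1})
    (hdc : DefComplete L M) (hlo : LocOMin L M) :
    (∀ (a b : M) (f : M → M), DefFunOn1 L (Set.Ioo a b) f →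
      (∀ x ∈ Set.Ioo a b, ∃ c d : M, c < x ∧ x < d ∧ Set.Ioo c d ⊆ Set.Ioo a b ∧
        StrictMonoOn f (Set.Ioo c d)) →
      StrictMonoOn f (Set.Ioo a b)) ∧
    (∀ (a b : M) (f : M → M), DefFunOn1 L (Set.Ioo a b) f →
      (∀ x ∈ Set.Ioo a b, ∃ c d : M, c < x ∧ x < d ∧ Set.Ioo c d ⊆ Set.Ioo a b ∧
        StrictAntiOn f (Set.Ioo c d)) →
      StrictAntiOn f (Set.Ioo a b)) := by
  let _ : TopologicalSpace M := Preorder.topology M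
  have : OrderTopology M := ⟨rfl⟩
  refine ⟨fun a b f hf hloc => (stmt_2_general hlt hdc ordConnected_Ioo hf).1 fun x hx => ?_,
    fun a b f hf hloc => (stmt_2_general hlt hdc ordConnected_Ioo hf).2 fun x hx => ?_⟩ <;>
  · obtain ⟨c, d, hcx, hxd, -, hfcd⟩ := hloc x hx
    exact ⟨Ioo c d, mem_nhdsWithin_of_mem_nhds (Ioo_mem_nhds hcx hxd), hfcd⟩
end

section
/- Let M be an o-minimal densely linearly ordered structure. Then M has a definable bijection between a bounded interval and an unbounded interval if and only if M has a definable homeomorphism between a bounded interval and an unbounded interval. -/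
open FirstOrder Set

/-- A bounded open interval of `M`. -/
def IsBddItvl {M : Type*} [Preorder M] (I : Set M) : Prop :=
  ∃ a b : M, a < b ∧ I = Set.Ioo a b

/-- An unbounded open interval of `M`. -/
def IsUnbddItvl {M : Type*} [Preorder M] (J : Set M) : Prop :=
  (∃ a : M, J = Set.Ioi a) ∨ (∃ b : M, J = Set.Iio b) ∨ J = Set.univ

/-!
A definable `f` from a bounded set to an unbounded set must blow up, by o-minimality, on one side of
some point `l`; reversing the orders of source and target, say `f → +∞` from the left. The functions
`k y = inf {f x | y < x < l}` and `h t = min {y | f ≥ t on (y, l)}` then form a Galois connection,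
so they are inverse to each other on their ranges. Both ranges are definable and cofinal, hence, by
o-minimality again, contain some `(e, l)` and some `(d, ∞)`, where `k` and `h` are inverse
homeomorphisms.
-/

open Filter Topology

section TameSets

variable {A : Type*} [LinearOrder A] {X : Set A}

theorem FinUnionPtsItvls.induction {P : Set A → Prop} (empty : P ∅) (singleton : ∀ x, P {x})
    (itvl : ∀ s, IsOpenItvl s → P s) (union : ∀ s t, P s → P t → P (s ∪ t))
    (hX : FinUnionPtsItvls X) : P X := by
  obtain ⟨n, f, hf, rfl⟩ := hX
  induction n with
  | zero => simpa using empty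
  | succ n ih =>
    have hsplit : ⋃ i, f i = f 0 ∪ ⋃ i : Fin n, f i.succ := by
      ext x; simp [Fin.exists_fin_succ]
    rw [hsplit]
    refine union _ _ ?_ (ih _ fun i ↦ hf i.succ)
    rcases hf 0 with ⟨x, hx⟩ | hI
    · exact hx ▸ singleton x
    · exact itvl _ hI

theorem FinUnionPtsItvls.preimage_ofDual (hX : FinUnionPtsItvls X) :
    FinUnionPtsItvls (OrderDual.ofDual ⁻¹' X) := by
  obtain ⟨n, f, hf, rfl⟩ := hX
  refine ⟨n, fun i ↦ OrderDual.ofDual ⁻¹' f i, fun i ↦ ?_, preimage_iUnion⟩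
  rcases hf i with ⟨x, hx⟩ | ⟨a, b, hx⟩ | ⟨a, hx⟩ | ⟨b, hx⟩ | hx <;> simp only [hx]
  · exact .inl ⟨OrderDual.toDual x, rfl⟩
  · exact .inr (.inl ⟨OrderDual.toDual b, OrderDual.toDual a, Set.ext fun _ ↦ and_comm⟩)
  · exact .inr (.inr (.inr (.inl ⟨OrderDual.toDual a, rfl⟩)))
  · exact .inr (.inr (.inl ⟨OrderDual.toDual b, rfl⟩))
  · exact .inr (.inr (.inr (.inr rfl)))

theorem FinUnionPtsItvls.exists_isLUB [DenselyOrdered A] [NoMaxOrder A]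
    (hX : FinUnionPtsItvls X) (hne : X.Nonempty) (hbdd : BddAbove X) : ∃ a, IsLUB X a := by
  revert hne hbdd
  refine hX.induction (P := fun X ↦ X.Nonempty → BddAbove X → ∃ a, IsLUB X a)
    (fun h ↦ (not_nonempty_empty h).elim) (fun x _ _ ↦ ⟨x, isLUB_singleton⟩) ?_ ?_
  · rintro s (⟨a, b, rfl⟩ | ⟨a, rfl⟩ | ⟨b, rfl⟩ | rfl) hne hbdd
    · exact ⟨b, isLUB_Ioo (nonempty_Ioo.1 hne)⟩
    · exact (not_bddAbove_Ioi a hbdd).elim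
    · exact ⟨b, isLUB_Iio⟩
    · have : Nonempty A := hne.to_type
      exact (not_bddAbove_univ hbdd).elim
  · intro s t hs ht hne hbdd
    obtain ⟨hbs, hbt⟩ := bddAbove_union.1 hbdd
    rcases s.eq_empty_or_nonempty with rfl | hns
    · rw [empty_union] at hne ⊢
      exact ht hne hbt
    rcases t.eq_empty_or_nonempty with rfl | hnt
    · rw [union_empty]
      exact hs hns hbs
    obtain ⟨a, ha⟩ := hs hns hbs
    obtain ⟨b, hb⟩ := ht hnt hbt
    exact ⟨a ⊔ b, ha.union hb⟩

theorem FinUnionPtsItvls.exists_isGLB [DenselyOrdered A] [NoMinOrder A]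
    (hX : FinUnionPtsItvls X) (hne : X.Nonempty) (hbdd : BddBelow X) : ∃ a, IsGLB X a :=
  hX.preimage_ofDual.exists_isLUB hne hbdd

theorem FinUnionPtsItvls.mem_or_compl_mem {F : Filter A}
    (hIio : ∀ a, Iio a ∈ F ∨ (Iio a)ᶜ ∈ F) (hIoi : ∀ a, Ioi a ∈ F ∨ (Ioi a)ᶜ ∈ F)
    (hX : FinUnionPtsItvls X) : X ∈ F ∨ Xᶜ ∈ F := by
  have union : ∀ s t : Set A, s ∈ F ∨ sᶜ ∈ F → t ∈ F ∨ tᶜ ∈ F → s ∪ t ∈ F ∨ (s ∪ t)ᶜ ∈ F := by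
    rintro s t (hs | hs) ht
    · exact .inl (mem_of_superset hs subset_union_left)
    · rcases ht with ht | ht
      · exact .inl (mem_of_superset ht subset_union_right)
      · exact .inr (compl_union s t ▸ inter_mem hs ht)
  have compl : ∀ s : Set A, s ∈ F ∨ sᶜ ∈ F → sᶜ ∈ F ∨ sᶜᶜ ∈ F := fun s hs ↦ by
    rwa [compl_compl, or_comm]
  refine hX.induction (.inr (by simp)) ?_ ?_ union
  · intro x
    have hx : {x} = (Iio x ∪ Ioi x)ᶜ := by rw [Iio_union_Ioi, compl_compl]
    exact hx ▸ compl _ (union _ _ (hIio x) (hIoi x))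
  · rintro s (⟨a, b, rfl⟩ | ⟨a, rfl⟩ | ⟨b, rfl⟩ | rfl)
    · rw [← Ioi_inter_Iio, ← compl_compl (Ioi a ∩ Iio b), compl_inter]
      exact compl _ (union _ _ (compl _ (hIoi a)) (compl _ (hIio b)))
    · exact hIoi a
    · exact hIio b
    · exact .inl univ_mem

theorem FinUnionPtsItvls.mem_or_compl_mem_atTop [NoMaxOrder A]
    (hX : FinUnionPtsItvls X) : X ∈ atTop ∨ Xᶜ ∈ atTop :=
  hX.mem_or_compl_mem (fun a ↦ .inr (compl_Iio (a := a) ▸ Ici_mem_atTop a))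
    (fun a ↦ .inl (Ioi_mem_atTop a))

variable [TopologicalSpace A] [OrderTopology A]

theorem FinUnionPtsItvls.mem_or_compl_mem_nhdsLT (hX : FinUnionPtsItvls X) (l : A) :
    X ∈ 𝓝[<] l ∨ Xᶜ ∈ 𝓝[<] l := by
  refine hX.mem_or_compl_mem (fun a ↦ ?_) (fun a ↦ ?_) <;> rcases lt_or_ge a l with hal | hla
  · rw [compl_Iio]
    exact .inr (mem_nhdsWithin_of_mem_nhds (Ici_mem_nhds hal))
  · exact .inl (mem_of_superset self_mem_nhdsWithin (Iio_subset_Iio hla))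
  · exact .inl (mem_nhdsWithin_of_mem_nhds (Ioi_mem_nhds hal))
  · rw [compl_Ioi]
    exact .inr (mem_of_superset self_mem_nhdsWithin fun x hx ↦ (le_of_lt hx).trans hla)

theorem FinUnionPtsItvls.mem_or_compl_mem_nhdsGT (hX : FinUnionPtsItvls X) (l : A) :
    X ∈ 𝓝[>] l ∨ Xᶜ ∈ 𝓝[>] l :=
  hX.preimage_ofDual.mem_or_compl_mem_nhdsLT (OrderDual.toDual l)

/-- A definable form of compactness: the sets `S t` accumulate at the supremum `l` of their
eventual lower bounds. -/
theorem exists_forall_mem_nhdsLT_or_nhdsGT [DenselyOrdered A] [NoMinOrder A] [NoMaxOrder A]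
    {B : Type*} [LinearOrder B] {S : B → Set A} (hanti : Antitone S)
    (hne : ∀ t, (S t).Nonempty) (hbelow : ∃ t, BddBelow (S t)) (habove : ∃ t, BddAbove (S t))
    (hinter : ∀ x, ∃ t, x ∉ S t) (htame : ∀ t, FinUnionPtsItvls (S t))
    (hbounds : FinUnionPtsItvls {y | ∃ t, ∀ x ∈ S t, y ≤ x}) :
    ∃ l, (∀ t, S t ∈ 𝓝[<] l) ∨ ∀ t, S t ∈ 𝓝[>] l := by
  obtain ⟨t₀, a, ha⟩ := hbelow
  obtain ⟨t₁, b, hb⟩ := habove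
  have hbdd : BddAbove {y | ∃ t, ∀ x ∈ S t, y ≤ x} := by
    refine ⟨b, fun y ⟨t, hy⟩ ↦ ?_⟩
    obtain ⟨x, hx⟩ := hne (max t t₁)
    exact (hy x (hanti (le_max_left _ _) hx)).trans (hb (hanti (le_max_right _ _) hx))
  obtain ⟨l, hl⟩ := hbounds.exists_isLUB ⟨a, t₀, fun x hx ↦ ha hx⟩ hbdd
  refine ⟨l, or_iff_not_imp_left.2 fun hleft ↦ ?_⟩
  push Not at hleft
  obtain ⟨t₂, ht₂⟩ := hleft
  have hright : ∃ t, S t ⊆ Ioi l := by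
    obtain ⟨e, hel, he⟩ := (mem_nhdsLT_iff_exists_Ioo_subset).1
      (((htame t₂).mem_or_compl_mem_nhdsLT l).resolve_left ht₂)
    obtain ⟨y, ⟨t₃, ht₃⟩, hey⟩ := (lt_isLUB_iff hl).1 hel
    obtain ⟨t₄, ht₄⟩ := hinter l
    refine ⟨max t₂ (max t₃ t₄), fun x hx ↦ ?_⟩
    have hx₃ : e < x := hey.trans_le
      (ht₃ x (hanti ((le_max_left _ _).trans (le_max_right _ _)) hx))
    have hxl : x ≠ l := by
      rintro rfl
      exact ht₄ (hanti ((le_max_right _ _).trans (le_max_right _ _)) hx)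
    by_contra hlx
    exact he ⟨hx₃, lt_of_le_of_ne (not_lt.1 hlx) hxl⟩ (hanti (le_max_left _ _) hx)
  obtain ⟨t₅, ht₅⟩ := hright
  intro t
  refine ((htame t).mem_or_compl_mem_nhdsGT l).resolve_right fun hcompl ↦ ?_
  obtain ⟨e, hle, he⟩ := mem_nhdsGT_iff_exists_Ioo_subset.1 hcompl
  refine not_lt.2 (hl.1 ⟨max t t₅, fun x hx ↦ ?_⟩) hle
  by_contra hxe
  exact he ⟨ht₅ (hanti (le_max_right _ _) hx), not_le.1 hxe⟩ (hanti (le_max_left _ _) hx)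

end TameSets

section LocalGaloisConnection

variable {A B : Type*} [LinearOrder A] [TopologicalSpace A] [OrderTopology A] [LinearOrder B]

theorem continuousOn_of_monotoneOn_of_isOpen_image [DenselyOrdered B]
    [TopologicalSpace B] [OrderTopology B] {s : Set A} {f : A → B}
    (hf : MonotoneOn f s) (hs : IsOpen s) (himage : IsOpen (f '' s)) : ContinuousOn f s :=
  fun _ hx ↦ (continuousAt_of_monotoneOn_of_image_mem_nhds hf (hs.mem_nhds hx)
    (himage.mem_nhds (mem_image_of_mem f hx))).continuousWithinAt

variable [DenselyOrdered A] [Nonempty B] {a l : A} {h : B → A} {k : A → B}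

theorem exists_invOn_Ioo_Ioi (hmem : ∀ t, h t ∈ Ico a l)
    (gc : ∀ y ∈ Ico a l, ∀ t, h t ≤ y ↔ t ≤ k y)
    (hrange : range h ∈ 𝓝[<] l) (krange : k '' Ico a l ∈ atTop) :
    ∃ e ∈ Ico a l, ∃ d, InvOn h k (Ioo e l) (Ioi d) ∧
      MapsTo k (Ioo e l) (Ioi d) ∧ MapsTo h (Ioi d) (Ioo e l) := by
  obtain ⟨d, hd⟩ := mem_atTop_sets.1 krange
  obtain ⟨e₀, he₀l, he₀⟩ :=
    (mem_nhdsLT_iff_exists_Ioo_subset' ((hmem d).1.trans_lt (hmem d).2)).1 hrange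
  obtain ⟨e, he, hel⟩ := exists_between (max_lt he₀l (hmem d).2)
  have hde : h d ≤ e := (le_max_right _ _).trans he.le
  have hea : a ≤ e := (hmem d).1.trans hde
  have hk : ∀ y ∈ Ioo e l, h (k y) = y := by
    intro y hy
    have hya : y ∈ Ico a l := ⟨hea.trans hy.1.le, hy.2⟩
    obtain ⟨t, rfl⟩ := he₀ ⟨((le_max_left _ _).trans_lt he).trans hy.1, hy.2⟩
    refine le_antisymm ((gc _ hya _).2 le_rfl) ?_
    exact (gc _ (hmem _) _).2 (((gc _ hya _).1 le_rfl).trans ((gc _ (hmem _) _).1 le_rfl))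
  have kh : ∀ t, k e < t → k (h t) = t := by
    intro t ht
    obtain ⟨y, hy, rfl⟩ := hd t (((gc e ⟨hea, hel⟩ d).1 hde).trans ht.le)
    refine le_antisymm ?_ ((gc _ (hmem _) _).1 le_rfl)
    exact (gc y hy _).1 (((gc _ (hmem _) _).2 le_rfl).trans ((gc y hy _).2 le_rfl))
  refine ⟨e, ⟨hea, hel⟩, k e, ⟨hk, kh⟩, fun y hy ↦ ?_, fun t ht ↦ ⟨?_, (hmem t).2⟩⟩
  · refine not_le.1 fun hle ↦ hy.1.not_ge ?_
    exact hk y hy ▸ (gc e ⟨hea, hel⟩ _).2 hle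
  · exact not_le.1 fun hle ↦ (not_le.2 ht) ((gc e ⟨hea, hel⟩ t).1 hle)

theorem exists_bijOn_continuousOn_invOn_Ioo_Ioi [DenselyOrdered B]
    [NoMaxOrder B] [TopologicalSpace B] [OrderTopology B] (hmem : ∀ t, h t ∈ Ico a l)
    (gc : ∀ y ∈ Ico a l, ∀ t, h t ≤ y ↔ t ≤ k y)
    (hrange : FinUnionPtsItvls (range h)) (krange : FinUnionPtsItvls (k '' Ico a l))
    (hcofinal : ∀ y < l, ∃ t, y < h t) :
    ∃ e ∈ Ico a l, ∃ d, BijOn k (Ioo e l) (Ioi d) ∧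
      ContinuousOn k (Ioo e l) ∧ ContinuousOn h (Ioi d) ∧ InvOn h k (Ioo e l) (Ioi d) := by
  have hrange_mem : range h ∈ 𝓝[<] l := by
    refine (hrange.mem_or_compl_mem_nhdsLT l).resolve_right fun hcompl ↦ ?_
    obtain ⟨t₀⟩ := ‹Nonempty B›
    obtain ⟨e, hel, he⟩ :=
      (mem_nhdsLT_iff_exists_Ioo_subset' ((hmem t₀).1.trans_lt (hmem t₀).2)).1 hcompl
    obtain ⟨t, ht⟩ := hcofinal e hel
    exact he ⟨ht, (hmem t).2⟩ (mem_range_self t)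
  have krange_mem : k '' Ico a l ∈ atTop := by
    refine krange.mem_or_compl_mem_atTop.resolve_right fun hcompl ↦ ?_
    obtain ⟨d, hd⟩ := mem_atTop_sets.1 hcompl
    exact hd (k (h d)) ((gc _ (hmem d) d).1 le_rfl) (mem_image_of_mem k (hmem d))
  obtain ⟨e, he, d, hinv, hk, hh⟩ := exists_invOn_Ioo_Ioi hmem gc hrange_mem krange_mem
  have kmono : MonotoneOn k (Ioo e l) := fun y hy z hz hyz ↦ by
    refine (gc z ⟨he.1.trans hz.1.le, hz.2⟩ _).1 (le_trans ?_ hyz)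
    exact (hinv.1 hy).le
  have hmono : MonotoneOn h (Ioi d) := fun s _ t ht hst ↦
    (gc _ (hmem t) s).2 (hst.trans (hinv.2 ht).ge)
  have kbij : BijOn k (Ioo e l) (Ioi d) := hinv.bijOn hk hh
  have hbij : BijOn h (Ioi d) (Ioo e l) := hinv.symm.bijOn hh hk
  exact ⟨e, he, d, kbij,
    continuousOn_of_monotoneOn_of_isOpen_image kmono isOpen_Ioo (kbij.image_eq ▸ isOpen_Ioi),
    continuousOn_of_monotoneOn_of_isOpen_image hmono isOpen_Ioi (hbij.image_eq ▸ isOpen_Ioo),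
    hinv⟩

end LocalGaloisConnection

section Definability

variable {L : FirstOrder.Language} {M : Type*} [L.Structure M] {α A B : Type*}

/-- A condition on assignments `v : α → M` is definable, with parameters from all of `M`. -/
def DefPred (L : FirstOrder.Language) {M : Type*} [L.Structure M] {α : Type*}
    (p : (α → M) → Prop) : Prop :=
  DefSet L {v | p v}

namespace DefPred

variable {p q : (α → M) → Prop}

theorem and (hp : DefPred L p) (hq : DefPred L q) : DefPred L fun v ↦ p v ∧ q v :=
  Set.Definable.inter hp hq

theorem not (hp : DefPred L p) : DefPred L fun v ↦ ¬ p v :=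
  Set.Definable.compl hp

theorem imp (hp : DefPred L p) (hq : DefPred L q) : DefPred L fun v ↦ p v → q v := by
  simpa only [not_and_not_right] using (hp.and hq.not).not

theorem iff (hp : DefPred L p) (hq : DefPred L q) : DefPred L fun v ↦ p v ↔ q v := by
  simpa only [iff_iff_implies_and_implies] using (hp.imp hq).and (hq.imp hp)

theorem ex (e : A ≃ M) {p : (α → M) → A → Prop}
    (hp : DefPred L fun w : α ⊕ Unit → M ↦ p (fun i ↦ w (.inl i)) (e.symm (w (.inr ())))) :
    DefPred L fun v ↦ ∃ x, p v x := by
  have exists_iff : ∀ v, (∃ x, p v x) ↔ ∃ u : Unit → M, p v (e.symm (u ())) := fun v ↦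
    ⟨fun ⟨x, hx⟩ ↦ ⟨fun _ ↦ e x, by rwa [e.symm_apply_apply]⟩, fun ⟨_, hu⟩ ↦ ⟨_, hu⟩⟩
  simp only [exists_iff]
  exact Set.Definable.exists_of_finite hp

theorem all (e : A ≃ M) {p : (α → M) → A → Prop}
    (hp : DefPred L fun w : α ⊕ Unit → M ↦ p (fun i ↦ w (.inl i)) (e.symm (w (.inr ())))) :
    DefPred L fun v ↦ ∀ x, p v x := by
  simpa only [not_exists_not] using (ex e (p := fun v x ↦ ¬ p v x) hp.not).not

end DefPred

/-- An `A`-valued function of assignments is definable when `A` is identified with `M` by `e`. -/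
def DefTerm (L : FirstOrder.Language) {M : Type*} [L.Structure M] {α A : Type*} (e : A ≃ M)
    (s : (α → M) → A) : Prop :=
  (univ : Set M).DefinableFun L fun v ↦ e (s v)

theorem DefTerm.var {e : A ≃ M} (i : α) : DefTerm L e fun v : α → M ↦ e.symm (v i) := by
  simpa only [DefTerm, Equiv.apply_symm_apply] using Set.DefinableFun.proj L

theorem DefTerm.const {e : A ≃ M} (c : A) : DefTerm L e fun _ : α → M ↦ c :=
  L.definableFun_const α (mem_univ (e c))

/-- A subset of `A` is definable when `A` is identified with `M` by `e`. -/
def DefSubset (L : FirstOrder.Language) {M : Type*} [L.Structure M] {A : Type*} (e : A ≃ M)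
    (X : Set A) : Prop :=
  DefPred L fun v : Fin 1 → M ↦ e.symm (v 0) ∈ X

/-- A relation between `A` and `B` is definable when both are identified with `M`. -/
def DefRel (L : FirstOrder.Language) {M : Type*} [L.Structure M] {A B : Type*} (eA : A ≃ M)
    (eB : B ≃ M) (R : A → B → Prop) : Prop :=
  DefPred L fun v : Fin 2 → M ↦ R (eA.symm (v 0)) (eB.symm (v 1))

/-- The restriction to `X` of a map from `A` to `B` has definable graph when both are identified
with `M`. -/
def DefMapOn (L : FirstOrder.Language) {M : Type*} [L.Structure M] {A B : Type*} (eA : A ≃ M)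
    (eB : B ≃ M) (X : Set A) (f : A → B) : Prop :=
  DefRel L eA eB fun x t ↦ x ∈ X ∧ f x = t

variable {eA : A ≃ M} {eB : B ≃ M} {X : Set A} {f : A → B}

theorem DefSubset.mem (hX : DefSubset L eA X) {s : (α → M) → A} (hs : DefTerm L eA s) :
    DefPred L fun v ↦ s v ∈ X := by
  have hmap : (univ : Set M).DefinableMap L fun v ↦ ![eA (s v)] := by
    simpa [Set.DefinableMap] using! hs
  simpa [DefPred, DefSet] using! Set.Definable.preimage_map hmap hX

theorem DefRel.rel {R : A → B → Prop} (hR : DefRel L eA eB R) {s : (α → M) → A}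
    {t : (α → M) → B} (hs : DefTerm L eA s) (ht : DefTerm L eB t) :
    DefPred L fun v ↦ R (s v) (t v) := by
  have hmap : (univ : Set M).DefinableMap L fun v ↦ ![eA (s v), eB (t v)] := by
    simpa [Set.DefinableMap] using ⟨hs, ht⟩
  simpa [DefPred, DefSet] using! Set.Definable.preimage_map hmap hR

theorem DefMapOn.mono (hf : DefMapOn L eA eB X f) {Y : Set A} (hY : DefSubset L eA Y)
    (hYX : Y ⊆ X) : DefMapOn L eA eB Y f := by
  have graph_iff : ∀ x t, x ∈ Y ∧ f x = t ↔ x ∈ Y ∧ x ∈ X ∧ f x = t := fun x t ↦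
    and_congr_right fun hx ↦ (and_iff_right (hYX hx)).symm
  simp only [DefMapOn, graph_iff]
  exact .and (hY.mem (.var _)) (hf.rel (.var _) (.var _))

theorem DefMapOn.image (hf : DefMapOn L eA eB X f) : DefSubset L eB (f '' X) :=
  .ex eA (hf.rel (.var _) (.var _))

theorem defMapOn_of_forall_iff {R : A → B → Prop} {S : B → B → Prop} (hX : DefSubset L eA X)
    (hR : DefRel L eA eB R) (hS : DefRel L eB eB S)
    (hext : ∀ t t', (∀ s, S s t ↔ S s t') → t = t')
    (hf : ∀ x ∈ X, ∀ s, S s (f x) ↔ R x s) : DefMapOn L eA eB X f := by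
  have graph_iff : ∀ x t, x ∈ X ∧ f x = t ↔ x ∈ X ∧ ∀ s, S s t ↔ R x s := fun x t ↦
    and_congr_right fun hx ↦ ⟨fun h ↦ h ▸ hf x hx,
      fun h ↦ hext _ _ fun s ↦ (hf x hx s).trans (h s).symm⟩
  simp only [DefMapOn, graph_iff]
  exact .and (hX.mem (.var _)) (.all eB (.iff (hS.rel (.var _) (.var _))
    (hR.rel (.var _) (.var _))))

/-- A linear order on `A` that is definable and o-minimal in `M` when `A` is identified with `M`
by `e`. Taking for `A` both `M` and its order dual lets one argument treat both ends of an
interval. -/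
structure DefOMinimal (L : FirstOrder.Language) {M : Type*} [L.Structure M] {A : Type*}
    [LinearOrder A] (e : A ≃ M) : Prop where
  lt : DefRel L e e fun x y : A ↦ x < y
  tame : ∀ X : Set A, DefSubset L e X → FinUnionPtsItvls X

section DefOMinimal

variable [LinearOrder A] {a b : A}

theorem DefOMinimal.dual (hA : DefOMinimal L eA) : DefOMinimal L (OrderDual.ofDual.trans eA) where
  lt := hA.lt.rel (.var (e := eA) 1) (.var (e := eA) 0)
  tame X hX := (hA.tame (OrderDual.toDual ⁻¹' X) hX).preimage_ofDual

theorem DefOMinimal.le (hA : DefOMinimal L eA) : DefRel L eA eA fun x y : A ↦ x ≤ y := by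
  simp only [← not_lt]
  exact .not (hA.lt.rel (.var _) (.var _))

theorem DefOMinimal.defSubset_Ioo (hA : DefOMinimal L eA) : DefSubset L eA (Ioo a b) :=
  .and (hA.lt.rel (.const _) (.var _)) (hA.lt.rel (.var _) (.const _))

theorem DefOMinimal.defSubset_Ico (hA : DefOMinimal L eA) : DefSubset L eA (Ico a b) :=
  .and (hA.le.rel (.const _) (.var _)) (hA.lt.rel (.var _) (.const _))

end DefOMinimal

end Definability

section TailLowerBound

variable {L : FirstOrder.Language} {M : Type*} [L.Structure M] {A B : Type*} [LinearOrder A]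
  [LinearOrder B] {eA : A ≃ M} {eB : B ≃ M} {f : A → B} {a l : A}

/-- `t` is a lower bound of `f` on `(y, l)`, where `a ≤ y`. On `[a, l)` this relation is the one
shared by the two sides of the Galois connection. -/
def TailLowerBound (f : A → B) (a l y : A) (t : B) : Prop :=
  a ≤ y ∧ ∀ x ∈ Ioo y l, t ≤ f x

theorem DefMapOn.defRel_tailLowerBound (hA : DefOMinimal L eA) (hB : DefOMinimal L eB)
    (hf : DefMapOn L eA eB (Ioo a l) f) : DefRel L eA eB (TailLowerBound f a l) := by
  have tailLowerBound_iff : ∀ y t, TailLowerBound f a l y t ↔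
      a ≤ y ∧ ∀ x s, (x ∈ Ioo a l ∧ f x = s) → y < x → t ≤ s := fun y t ↦
    and_congr_right fun hay ↦ ⟨fun h x s ⟨hx, hs⟩ hyx ↦ hs ▸ h x ⟨hyx, hx.2⟩,
      fun h x hx ↦ h x _ ⟨⟨hay.trans_lt hx.1, hx.2⟩, rfl⟩ hx.1⟩
  simp only [DefRel, tailLowerBound_iff]
  exact .and (hA.le.rel (.const _) (.var _)) (.all eA (.all eB (.imp (hf.rel (.var _) (.var _))
    (.imp (hA.lt.rel (.var _) (.var _)) (hB.le.rel (.var _) (.var _))))))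

theorem exists_forall_le_iff_tailLowerBound [DenselyOrdered A] [DenselyOrdered B] [NoMaxOrder B]
    (htame : ∀ y, FinUnionPtsItvls {t | TailLowerBound f a l y t})
    (hbdd : BddBelow (f '' Ioo a l)) :
    ∃ k : A → B, ∀ y ∈ Ico a l, ∀ t, t ≤ k y ↔ TailLowerBound f a l y t := by
  obtain ⟨t₀, ht₀⟩ := hbdd
  have : Nonempty B := ⟨t₀⟩
  suffices h : ∀ y ∈ Ico a l, ∃ m, ∀ t, t ≤ m ↔ TailLowerBound f a l y t by
    choose! k hk using h
    exact ⟨k, hk⟩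
  intro y hy
  have hupper : ∀ x ∈ Ioo y l, f x ∈ upperBounds {t | TailLowerBound f a l y t} :=
    fun x hx t ht ↦ ht.2 x hx
  obtain ⟨x₀, hx₀⟩ := exists_between hy.2
  obtain ⟨m, hm⟩ := (htame y).exists_isLUB
    ⟨t₀, hy.1, fun x hx ↦ ht₀ (mem_image_of_mem f ⟨hy.1.trans_lt hx.1, hx.2⟩)⟩
    ⟨f x₀, hupper x₀ hx₀⟩
  exact ⟨m, fun t ↦ ⟨fun htm ↦ ⟨hy.1, fun x hx ↦ htm.trans (hm.2 (hupper x hx))⟩,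
    fun ht ↦ hm.1 ht⟩⟩

theorem exists_forall_le_iff_tailLowerBound_of_tendsto [DenselyOrdered A] [NoMinOrder A]
    [TopologicalSpace A] [OrderTopology A]
    (htame : ∀ t, FinUnionPtsItvls {y | TailLowerBound f a l y t}) (hal : a < l)
    (hlim : Tendsto f (𝓝[<] l) atTop) :
    ∃ h : B → A, (∀ t, h t ∈ Ico a l) ∧ ∀ t y, h t ≤ y ↔ TailLowerBound f a l y t := by
  suffices h : ∀ t, ∃ m ∈ Ico a l, ∀ y, m ≤ y ↔ TailLowerBound f a l y t by
    choose h hmem hle using h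
    exact ⟨h, hmem, hle⟩
  intro t
  obtain ⟨e, he, het⟩ := (mem_nhdsLT_iff_exists_Ioo_subset' hal).1 (hlim (Ici_mem_atTop t))
  have hlower : a ∈ lowerBounds {y | TailLowerBound f a l y t} := fun y hy ↦ hy.1
  have hmax : TailLowerBound f a l (max a e) t :=
    ⟨le_max_left _ _, fun x hx ↦ het ⟨(le_max_right _ _).trans_lt hx.1, hx.2⟩⟩
  obtain ⟨m, hm⟩ := (htame t).exists_isGLB ⟨_, hmax⟩ ⟨a, hlower⟩
  have ham : a ≤ m := hm.2 hlower
  refine ⟨m, ⟨ham, (hm.1 hmax).trans_lt (max_lt hal he)⟩, fun y ↦ ⟨fun hmy ↦ ?_, fun hy ↦ hm.1 hy⟩⟩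
  refine ⟨ham.trans hmy, fun x hx ↦ ?_⟩
  obtain ⟨z, hz, -, hzx⟩ := hm.exists_between (hmy.trans_lt hx.1)
  exact hz.2 x ⟨hzx, hx.2⟩

end TailLowerBound

section DefHomeomorphic

variable {L : FirstOrder.Language} {M : Type*} [L.Structure M] {A B : Type*}
  [TopologicalSpace A] [TopologicalSpace B] {eA : A ≃ M} {eB : B ≃ M}

/-- There is a definable homeomorphism `f` from `I` to `J`, with inverse `g`, when `A` and `B` are
identified with `M`. The values of `f` outside `I` and of `g` outside `J` are irrelevant. -/
def DefHomeomorphic (L : FirstOrder.Language) {M : Type*} [L.Structure M] {A B : Type*}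
    [TopologicalSpace A] [TopologicalSpace B] (eA : A ≃ M) (eB : B ≃ M) (I : Set A) (J : Set B) :
    Prop :=
  ∃ (f : A → B) (g : B → A), DefMapOn L eA eB I f ∧ BijOn f I J ∧ ContinuousOn f I ∧
    ContinuousOn g J ∧ InvOn g f I J

theorem DefHomeomorphic.of_dual_left {I : Set Aᵒᵈ} {J : Set B}
    (h : DefHomeomorphic L (OrderDual.ofDual.trans eA) eB I J) :
    DefHomeomorphic L eA eB (OrderDual.toDual ⁻¹' I) J :=
  let ⟨f, g, hf, hbij, hfc, hgc, hinv⟩ := h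
  ⟨f ∘ OrderDual.toDual, OrderDual.ofDual ∘ g, hf, hbij, hfc, hgc, hinv⟩

theorem DefHomeomorphic.of_dual_right {I : Set A} {J : Set Bᵒᵈ}
    (h : DefHomeomorphic L eA (OrderDual.ofDual.trans eB) I J) :
    DefHomeomorphic L eA eB I (OrderDual.toDual ⁻¹' J) :=
  let ⟨f, g, hf, hbij, hfc, hgc, hinv⟩ := h
  ⟨OrderDual.ofDual ∘ f, g ∘ OrderDual.toDual, hf, hbij, hfc, hgc, hinv⟩

variable [LinearOrder A] [DenselyOrdered A] [OrderTopology A] [LinearOrder B] [DenselyOrdered B]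
  [NoMaxOrder B] [OrderTopology B] {X : Set A} {f : A → B} {a l : A}

theorem DefMapOn.exists_defHomeomorphic_of_tendsto [NoMinOrder A] (hA : DefOMinimal L eA)
    (hB : DefOMinimal L eB) (hf : DefMapOn L eA eB (Ioo a l) f) (hal : a < l)
    (hbdd : BddBelow (f '' Ioo a l)) (hlim : Tendsto f (𝓝[<] l) atTop) :
    ∃ e < l, ∃ d, DefHomeomorphic L eA eB (Ioo e l) (Ioi d) := by
  have : Nonempty B := ⟨f a⟩
  have hR := hf.defRel_tailLowerBound hA hB
  obtain ⟨k, hk⟩ := exists_forall_le_iff_tailLowerBound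
    (fun y ↦ hB.tame _ (hR.rel (.const y) (.var _))) hbdd
  obtain ⟨h, hmem, hh⟩ := exists_forall_le_iff_tailLowerBound_of_tendsto
    (fun t ↦ hA.tame _ (hR.rel (.var _) (.const t))) hal hlim
  have hkdef : DefMapOn L eA eB (Ico a l) k :=
    defMapOn_of_forall_iff hA.defSubset_Ico hR hB.le (fun _ _ ↦ eq_of_forall_le_iff) hk
  have hhdef : DefMapOn L eB eA univ h :=
    defMapOn_of_forall_iff (R := fun t y ↦ TailLowerBound f a l y t) (S := fun y s ↦ s ≤ y)
      Set.definable_univ (hR.rel (.var 1) (.var 0)) (hA.le.rel (.var 1) (.var 0))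
      (fun _ _ ↦ eq_of_forall_ge_iff) fun t _ y ↦ hh t y
  have hcofinal : ∀ y < l, ∃ t, y < h t := by
    intro y hyl
    obtain ⟨x, hx, hxl⟩ := exists_between hyl
    obtain ⟨t, ht⟩ := exists_gt (f x)
    exact ⟨t, not_le.1 fun hty ↦ ht.not_ge (((hh t y).1 hty).2 x ⟨hx, hxl⟩)⟩
  obtain ⟨e, he, d, hbij, hkc, hhc, hinv⟩ := exists_bijOn_continuousOn_invOn_Ioo_Ioi hmem
    (fun y hy t ↦ (hh t y).trans (hk y hy t).symm)
    (image_univ ▸ hA.tame _ hhdef.image) (hB.tame _ hkdef.image) hcofinal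
  exact ⟨e, he.2, d, k, h, hkdef.mono hA.defSubset_Ioo (Ioo_subset_Ico_self.trans
    (Ico_subset_Ico_left he.1)), hbij, hkc, hhc, hinv⟩

theorem DefMapOn.exists_defHomeomorphic_of_forall_mem_nhdsLT [NoMinOrder A]
    (hA : DefOMinimal L eA) (hB : DefOMinimal L eB) (hf : DefMapOn L eA eB X f)
    (hlim : ∀ t, {x ∈ X | t < f x} ∈ 𝓝[<] l) :
    ∃ e < l, ∃ d, DefHomeomorphic L eA eB (Ioo e l) (Ioi d) := by
  obtain ⟨a, hal, ha⟩ := mem_nhdsLT_iff_exists_Ioo_subset.1 (hlim (f l))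
  refine (hf.mono hA.defSubset_Ioo fun x hx ↦ (ha hx).1).exists_defHomeomorphic_of_tendsto hA hB
    hal ⟨f l, forall_mem_image.2 fun x hx ↦ (ha hx).2.le⟩ (tendsto_atTop.2 fun t ↦ ?_)
  filter_upwards [hlim t] with x hx using hx.2.le

theorem DefMapOn.exists_defHomeomorphic_of_forall_mem_nhdsGT [NoMaxOrder A]
    (hA : DefOMinimal L eA) (hB : DefOMinimal L eB) (hf : DefMapOn L eA eB X f)
    (hlim : ∀ t, {x ∈ X | t < f x} ∈ 𝓝[>] l) :
    ∃ e > l, ∃ d, DefHomeomorphic L eA eB (Ioo l e) (Ioi d) := by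
  obtain ⟨e, hle, d, hd⟩ :=
    exists_defHomeomorphic_of_forall_mem_nhdsLT (A := Aᵒᵈ) (l := OrderDual.toDual l)
      (f := f ∘ OrderDual.ofDual) hA.dual hB hf hlim
  have hIoo : Ioo l (OrderDual.ofDual e) = OrderDual.toDual ⁻¹' Ioo e (OrderDual.toDual l) :=
    Set.ext fun _ ↦ and_comm
  exact ⟨OrderDual.ofDual e, hle, d, hIoo ▸ hd.of_dual_left⟩

theorem DefMapOn.exists_defHomeomorphic_of_not_bddAbove [NoMinOrder A] [NoMaxOrder A]
    (hA : DefOMinimal L eA) (hB : DefOMinimal L eB) (hf : DefMapOn L eA eB X f)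
    (hbelow : BddBelow X) (habove : BddAbove X) (hunbdd : ¬ BddAbove (f '' X)) :
    ∃ p q d, p < q ∧ DefHomeomorphic L eA eB (Ioo p q) (Ioi d) := by
  have : Nonempty B := hbelow.nonempty.map f
  let S (t : B) : Set A := {x ∈ X | t < f x}
  have hsub (t : B) : S t ⊆ X := sep_subset _ _
  have hne (t : B) : (S t).Nonempty := by
    obtain ⟨_, ⟨x, hx, rfl⟩, ht⟩ := not_bddAbove_iff.1 hunbdd t
    exact ⟨x, hx, ht⟩
  have htame (t : B) : FinUnionPtsItvls (S t) := by
    have mem_iff : ∀ x, x ∈ S t ↔ ∃ s, (x ∈ X ∧ f x = s) ∧ t < s := by simp [S]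
    refine hA.tame _ ?_
    simp only [DefSubset, mem_iff]
    exact .ex eB (.and (hf.rel (.var _) (.var _)) (hB.lt.rel (.const _) (.var _)))
  have hbounds : FinUnionPtsItvls {y | ∃ t, ∀ x ∈ S t, y ≤ x} := by
    have bound_iff : ∀ y, (∃ t, ∀ x ∈ S t, y ≤ x) ↔
        ∃ t, ∀ x s, (x ∈ X ∧ f x = s) → t < s → y ≤ x := by simp [S]
    refine hA.tame _ ?_
    simp only [DefSubset, mem_ofPred, bound_iff]
    exact .ex eB (.all eA (.all eB (.imp (hf.rel (.var _) (.var _))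
      (.imp (hB.lt.rel (.var _) (.var _)) (hA.le.rel (.var _) (.var _))))))
  obtain ⟨t₀⟩ := ‹Nonempty B›
  obtain ⟨l, hl | hl⟩ := exists_forall_mem_nhdsLT_or_nhdsGT (S := S)
    (fun t t' htt' x hx ↦ ⟨hx.1, htt'.trans_lt hx.2⟩) hne ⟨t₀, hbelow.mono (hsub t₀)⟩
    ⟨t₀, habove.mono (hsub t₀)⟩ (fun x ↦ ⟨f x, fun hx ↦ lt_irrefl _ hx.2⟩) htame hbounds
  · obtain ⟨e, hel, d, hd⟩ := hf.exists_defHomeomorphic_of_forall_mem_nhdsLT hA hB hl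
    exact ⟨e, l, d, hel, hd⟩
  · obtain ⟨e, hle, d, hd⟩ := hf.exists_defHomeomorphic_of_forall_mem_nhdsGT hA hB hl
    exact ⟨l, e, d, hle, hd⟩

theorem DefMapOn.exists_defHomeomorphic_isUnbddItvl [NoMinOrder A] [NoMaxOrder A] [NoMinOrder B]
    (hA : DefOMinimal L eA) (hB : DefOMinimal L eB) (hf : DefMapOn L eA eB X f)
    (hbelow : BddBelow X) (habove : BddAbove X)
    (hunbdd : ¬ (BddBelow (f '' X) ∧ BddAbove (f '' X))) :
    ∃ I J, IsBddItvl I ∧ IsUnbddItvl J ∧ DefHomeomorphic L eA eB I J := by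
  rcases not_and_or.1 hunbdd with hbot | htop
  · obtain ⟨p, q, d, hpq, h⟩ := exists_defHomeomorphic_of_not_bddAbove (B := Bᵒᵈ)
      (f := OrderDual.toDual ∘ f) hA hB.dual hf hbelow habove hbot
    exact ⟨_, Iio (OrderDual.ofDual d), ⟨p, q, hpq, rfl⟩, .inr (.inl ⟨_, rfl⟩), h.of_dual_right⟩
  · obtain ⟨p, q, d, hpq, h⟩ :=
      hf.exists_defHomeomorphic_of_not_bddAbove hA hB hbelow habove htop
    exact ⟨_, _, ⟨p, q, hpq, rfl⟩, .inl ⟨d, rfl⟩, h⟩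

end DefHomeomorphic

theorem IsUnbddItvl.not_bdd {M : Type*} [Preorder M] [NoMinOrder M] [NoMaxOrder M] {J : Set M}
    (hJ : IsUnbddItvl J) : ¬ (BddBelow J ∧ BddAbove J) := by
  rintro ⟨hbelow, habove⟩
  rcases hJ with ⟨a, rfl⟩ | ⟨b, rfl⟩ | rfl
  · exact not_bddAbove_Ioi a habove
  · exact not_bddBelow_Iio b hbelow
  · exact not_bddAbove_univ habove

theorem stmt_16_general (L : FirstOrder.Language) (M : Type*) [L.Structure M]
    [LinearOrder M] [DenselyOrdered M] [NoMinOrder M] [NoMaxOrder M]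
    [TopologicalSpace M] [OrderTopology M]
    (hlt : DefSet L {x : Fin 2 → M | x 0 < x 1})
    (homin : ∀ X : Set M, DefSet1 L X → FinUnionPtsItvls X) :
    (∃ (X : Set M) (f : M → M), BddBelow X ∧ BddAbove X ∧ DefFunOn1 L X f ∧
      ¬ (BddBelow (f '' X) ∧ BddAbove (f '' X))) ↔
    (∃ (I J : Set M) (f g : M → M), IsBddItvl I ∧ IsUnbddItvl J ∧
      DefFunOn1 L I f ∧ BijOn f I J ∧ ContinuousOn f I ∧ ContinuousOn g J ∧
      (∀ x ∈ I, g (f x) = x) ∧ (∀ y ∈ J, f (g y) = y)) := by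
  have hM : DefOMinimal L (Equiv.refl M) := ⟨hlt, homin⟩
  constructor
  · rintro ⟨X, f, hbelow, habove, hf, hunbdd⟩
    obtain ⟨I, J, hI, hJ, f, g, hf, hbij, hfc, hgc, hgf, hfg⟩ :=
      DefMapOn.exists_defHomeomorphic_isUnbddItvl hM hM hf hbelow habove hunbdd
    exact ⟨I, J, f, g, hI, hJ, hf, hbij, hfc, hgc, fun x hx ↦ hgf hx, fun y hy ↦ hfg hy⟩
  · rintro ⟨_, J, f, -, ⟨a, b, -, rfl⟩, hJ, hf, hbij, -⟩
    exact ⟨Ioo a b, f, bddBelow_Ioo, bddAbove_Ioo, hf, hbij.image_eq ▸ hJ.not_bdd⟩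

/-- (In an o-minimal structure, there is a definable bijection between a
bounded interval and an unbounded interval iff there is a definable homeomorphism between
a bounded interval and an unbounded interval). -/
theorem stmt_16 (L : FirstOrder.Language) (M : Type*) [L.Structure M]
    [LinearOrder M] [DenselyOrdered M] [NoMinOrder M] [NoMaxOrder M] [Nonempty M]
    [TopologicalSpace M] [OrderTopology M]
    (hlt : DefSet L {x : Fin 2 → M | x 0 < x 1})
    (homin : ∀ X : Set M, DefSet1 L X → FinUnionPtsItvls X) :
    (∃ (I J : Set M) (f : M → M), IsBddItvl I ∧ IsUnbddItvl J ∧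
      DefFunOn1 L I f ∧ Set.BijOn f I J) ↔
    (∃ (I J : Set M) (f g : M → M), IsBddItvl I ∧ IsUnbddItvl J ∧
      DefFunOn1 L I f ∧ Set.BijOn f I J ∧ ContinuousOn f I ∧ ContinuousOn g J ∧
      (∀ x ∈ I, g (f x) = x) ∧ (∀ y ∈ J, f (g y) = y)) := by
  constructor
  · rintro ⟨_, J, f, ⟨a, b, -, rfl⟩, hJ, hf, hbij⟩
    exact (stmt_16_general L M hlt homin).1
      ⟨Ioo a b, f, bddBelow_Ioo, bddAbove_Ioo, hf, hbij.image_eq ▸ hJ.not_bdd⟩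
  · rintro ⟨I, J, f, -, hI, hJ, hf, hbij, -⟩
    exact ⟨I, J, f, hI, hJ, hf, hbij⟩
end
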